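/- The homotopy category of ℤ-indexed cochain complexes of injective Λ-left-modules (the full subcategory of K(Λ) on complexes all of whose components are injective Λ-modules) is idempotent complete: every idempotent endomorphism in this category splits, i.e., for every object X and every morphism e : X → X with e ∘ e = e there exist an object X₁ and morphisms x₁ : X₁ → X and x : X → X₁ with x₁ ∘ x = e and x ∘ x₁ = id. -/

import Mathlib

open CategoryTheory CategoryTheory.Limits

namespace CategoryTheory.Pretriangulated

variable {T : Type*} [Category* T] [HasZeroObject T] [HasShift T ℤ] [Preadditive T]
  [∀ n : ℤ, (shiftFunctor T n).Additive] [Pretriangulated T]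

/-- Let `P` be a countable power of `X`, with projections `π n`. An idempotent `e` of `X` splits
through the fibre of the endomorphism of `P` whose `n`-th component is `π n - π (n + 1) ≫ e`. -/
theorem exists_splitting_of_distinguished {X P Y : T} {π : ℕ → (P ⟶ X)}
    (hP : IsLimit (Fan.mk P π)) {e : X ⟶ X} (he : e ≫ e = e) {φ : P ⟶ P}
    (hφ : ∀ n, φ ≫ π n = π n - π (n + 1) ≫ e)
    {i : Y ⟶ P} {δ : P ⟶ Y⟦(1 : ℤ)⟧} (hT : Triangle.mk i φ δ ∈ distTriang T) :
    ∃ (x₁ : Y ⟶ X) (x : X ⟶ Y), x ≫ x₁ = e ∧ x₁ ≫ x = 𝟙 Y := by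
  have hom_ext {A : T} {f g : A ⟶ P} (h : ∀ n, f ≫ π n = g ≫ π n) : f = g :=
    hP.hom_ext fun ⟨n⟩ ↦ h n
  have lift_π {A : T} (f : ℕ → (A ⟶ X)) (n : ℕ) : Fan.IsLimit.lift hP f ≫ π n = f n :=
    Fan.IsLimit.fac hP f n
  have hφ_epi : Epi φ := by
    refine (SplitEpi.mk (Fan.IsLimit.lift hP fun n ↦
      π n - π n ≫ e - ∑ j ∈ Finset.range n, π j ≫ e) (hom_ext fun n ↦ ?_)).epi
    simp [hφ, reassoc_of% lift_π, lift_π, Preadditive.sub_comp, Preadditive.sum_comp,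
      Finset.sum_range_succ, he]
    abel
  have hi_mono : Mono i :=
    Triangle.mono₁ _ hT (Triangle.mor₃_eq_zero_of_epi₂ _ hT hφ_epi)
  have hiφ : i ≫ φ = 0 := comp_distTriang_mor_zero₁₂ _ hT
  have hi_succ (n : ℕ) : i ≫ π n = i ≫ π (n + 1) ≫ e := by
    simpa [hφ, sub_eq_zero] using congr($hiφ ≫ π n)
  have hi_e (n : ℕ) : i ≫ π n ≫ e = i ≫ π n := by
    rw [← Category.assoc, hi_succ]
    simp [he]
  have hi_const (n : ℕ) : i ≫ π n = i ≫ π 0 := by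
    induction n with
    | zero => rfl
    | succ n ih => rw [← ih, hi_succ n, hi_e]
  have he_φ : Fan.IsLimit.lift hP (fun _ ↦ e) ≫ φ = 0 :=
    hom_ext fun n ↦ by simp [hφ, lift_π, reassoc_of% lift_π, he]
  obtain ⟨x, hx⟩ : ∃ x : X ⟶ Y, Fan.IsLimit.lift hP (fun _ ↦ e) = x ≫ i :=
    Triangle.coyoneda_exact₂ _ hT _ he_φ
  refine ⟨i ≫ π 0, x, ?_, ?_⟩
  · rw [← Category.assoc, ← hx, lift_π]
  · rw [← cancel_mono i, Category.assoc, Category.assoc, ← hx]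
    exact hom_ext fun n ↦ by simp [lift_π, hi_e, hi_const n]

end CategoryTheory.Pretriangulated

namespace HomologicalComplex

variable {C ι J : Type*} [Category* C] [Preadditive C] [HasProductsOfShape J C]
  {c : ComplexShape ι}

/-- The degreewise product of a family of complexes. -/
noncomputable def piComplex (K : J → HomologicalComplex C c) : HomologicalComplex C c where
  X i := ∏ᶜ fun j ↦ (K j).X i
  d i i' := Limits.Pi.map fun j ↦ (K j).d i i'
  shape i i' h := Pi.hom_ext _ _ fun j ↦ by simp [(K j).shape i i' h]
  d_comp_d' _ _ _ _ _ := Pi.hom_ext _ _ fun j ↦ by simp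

namespace piComplex

variable (K : J → HomologicalComplex C c)

/-- The projections from the degreewise product of complexes. -/
noncomputable def proj (j : J) : piComplex K ⟶ K j where
  f i := Pi.π _ j
  comm' _ _ _ := by simp [piComplex]

variable {K}

lemma X_hom_ext {A : C} {i : ι} {f g : A ⟶ (piComplex K).X i}
    (h : ∀ j, f ≫ (proj K j).f i = g ≫ (proj K j).f i) : f = g :=
  Pi.hom_ext _ _ h

/-- A family of morphisms to the components of given degree induces a morphism to the component
of the degreewise product. -/
noncomputable def liftX {A : C} {i : ι} (f : ∀ j, A ⟶ (K j).X i) : A ⟶ (piComplex K).X i :=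
  Pi.lift f

@[simp]
lemma liftX_proj_f {A : C} {i : ι} (f : ∀ j, A ⟶ (K j).X i) (j : J) :
    liftX f ≫ (proj K j).f i = f j :=
  Pi.lift_π f j

/-- A family of chain maps induces a chain map to the degreewise product. -/
noncomputable def lift {L : HomologicalComplex C c} (f : ∀ j, L ⟶ K j) : L ⟶ piComplex K where
  f i := liftX fun j ↦ (f j).f i
  comm' i i' _ := X_hom_ext fun j ↦ by
    rw [Category.assoc, Category.assoc, ← (proj K j).comm, liftX_proj_f,
      ← Category.assoc, liftX_proj_f, (f j).comm]

@[simp]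
lemma lift_proj {L : HomologicalComplex C c} (f : ∀ j, L ⟶ K j) (j : J) :
    lift f ≫ proj K j = f j := by
  ext i
  simp [lift]

/-- Chain maps to a degreewise product are homotopic if all their components are. -/
noncomputable def homotopyOfComponents {L : HomologicalComplex C c} {f g : L ⟶ piComplex K}
    (h : ∀ j, Homotopy (f ≫ proj K j) (g ≫ proj K j)) : Homotopy f g where
  hom i i' := liftX fun j ↦ (h j).hom i i'
  zero i i' hi := X_hom_ext fun j ↦ by simp [(h j).zero i i' hi]
  comm i := X_hom_ext fun j ↦ by
    simp only [Preadditive.add_comp, ← dNext_comp_right, ← prevD_comp_right, liftX_proj_f]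
    exact (h j).comm i

instance injective_X (i : ι) [∀ j, Injective ((K j).X i)] : Injective ((piComplex K).X i) :=
  inferInstanceAs (Injective (∏ᶜ fun j ↦ (K j).X i))

variable (K)

lemma existsUnique_quotient_lift {Z : HomotopyCategory C c}
    (f : ∀ j, Z ⟶ (HomotopyCategory.quotient C c).obj (K j)) :
    ∃! g : Z ⟶ (HomotopyCategory.quotient C c).obj (piComplex K),
      ∀ j, g ≫ (HomotopyCategory.quotient C c).map (proj K j) = f j := by
  obtain ⟨L, rfl⟩ := HomotopyCategory.quotient_obj_surjective Z
  choose f' hf' using fun j ↦ (HomotopyCategory.quotient C c).map_surjective (f j)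
  refine ⟨(HomotopyCategory.quotient C c).map (lift f'), fun j ↦ ?_, fun g hg ↦ ?_⟩
  · rw [← Functor.map_comp, lift_proj, hf']
  · obtain ⟨g, rfl⟩ := (HomotopyCategory.quotient C c).map_surjective g
    refine HomotopyCategory.eq_of_homotopy _ _ (homotopyOfComponents fun j ↦
      HomotopyCategory.homotopyOfEq _ _ ?_)
    rw [lift_proj, Functor.map_comp, hg, hf']

/-- The degreewise product of complexes is their product in the homotopy category. -/
noncomputable def isLimitQuotientFan :
    IsLimit (Fan.mk ((HomotopyCategory.quotient C c).obj (piComplex K))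
      fun j ↦ (HomotopyCategory.quotient C c).map (proj K j)) :=
  Fan.IsLimit.mk _ (fun s ↦ (existsUnique_quotient_lift K s.proj).choose)
    (fun s ↦ (existsUnique_quotient_lift K s.proj).choose_spec.1)
    (fun s m hm ↦ (existsUnique_quotient_lift K s.proj).choose_spec.2 m hm)

end piComplex

end HomologicalComplex

namespace CochainComplex.mappingCocone

variable {C : Type*} [Category* C] [Preadditive C] [HasBinaryBiproducts C]
  {K L : CochainComplex C ℤ} (φ : K ⟶ L)

lemma injective_X (i : ℤ) [Injective (K.X i)] [Injective (L.X (i + -1))] :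
    Injective ((mappingCocone φ).X i) :=
  Retract.injective (Y := K.X i ⊞ L.X (i + -1))
    { i := biprod.lift ((fst φ).f i) ((snd φ).v i _ rfl)
      r := biprod.desc ((inl φ).v i i (add_zero i)) ((inr φ).1.v _ i (by lia))
      retract := by rw [biprod.lift_desc, id_X] }

open Pretriangulated in
lemma quotient_mapTriangle_distinguished [HasZeroObject C] :
    (HomotopyCategory.quotient C (ComplexShape.up ℤ)).mapTriangle.obj (triangle φ) ∈
      distTriang (HomotopyCategory C (ComplexShape.up ℤ)) := by
  rw [rotate_distinguished_triangle]
  exact isomorphic_distinguished _ (HomotopyCategory.mappingCone_triangleh_distinguished φ) _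
    (((HomotopyCategory.quotient C _).mapTriangleRotateIso.app _) ≪≫
      (HomotopyCategory.quotient C _).mapTriangle.mapIso (rotateTriangleIso φ))

end CochainComplex.mappingCocone

/-- The homotopy category of complexes of injective `Λ`-modules (the full subcategory of
`K(Λ)` on complexes all of whose components are injective) is idempotent complete: every
idempotent endomorphism `e : X ⟶ X` splits via an object `X₁` of the subcategory. -/
theorem homotopyCategory_of_injectives_idempotent_complete
    (k : Type) [Field k] (Λ : Type) [Ring Λ] [Algebra k Λ] [FiniteDimensional k Λ]
    (X : HomotopyCategory (ModuleCat.{0} Λ) (ComplexShape.up ℤ))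
    (hX : ∀ i : ℤ, Injective (X.as.X i))
    (e : X ⟶ X) (he : e ≫ e = e) :
    ∃ (X₁ : HomotopyCategory (ModuleCat.{0} Λ) (ComplexShape.up ℤ))
      (_ : ∀ i : ℤ, Injective (X₁.as.X i))
      (x₁ : X₁ ⟶ X) (x : X ⟶ X₁),
      x ≫ x₁ = e ∧ x₁ ≫ x = 𝟙 X₁ := by
  obtain ⟨K, rfl⟩ := HomotopyCategory.quotient_obj_surjective X
  obtain ⟨f, rfl⟩ := (HomotopyCategory.quotient _ _).map_surjective e
  replace hX (i : ℤ) : Injective (K.X i) := hX i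
  let π := HomologicalComplex.piComplex.proj fun _ : ℕ ↦ K
  let φ := HomologicalComplex.piComplex.lift fun n ↦ π n - π (n + 1) ≫ f
  refine ⟨(HomotopyCategory.quotient _ _).obj (CochainComplex.mappingCocone φ),
    fun i ↦ CochainComplex.mappingCocone.injective_X φ i, ?_⟩
  refine Pretriangulated.exists_splitting_of_distinguished
    (HomologicalComplex.piComplex.isLimitQuotientFan fun _ : ℕ ↦ K) he (fun n ↦ ?_)
    (CochainComplex.mappingCocone.quotient_mapTriangle_distinguished φ)
  rw [← Functor.map_comp, ← Functor.map_sub]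
  exact congr_arg _ (HomologicalComplex.piComplex.lift_proj _ n)
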